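/- Let m ≥ 1 be an integer, κ ∈ ℝ, T > 0, and R > 0 with 2·√κ·R < π when κ > 0. Define ξ : (0,R) → ℝ by ξ(r) = (sn_κ(r)^{4m−4}·sn_{4κ}(r)³)^{1/(4m−1)}, and let s : [0,R) → ℝ be the antiderivative s(r) = ∫₀^r ξ(ρ) dρ. Let φ : ℝ × ℝ → ℝ be C^∞ on an open set containing {(s(r), t) : r ∈ (0,R), t ∈ (0,T)}, and suppose ∂ₜφ(s(r),t) = ξ(r)²·∂ₛ²φ(s(r),t) + 4m·ξ'(r)·∂ₛφ(s(r),t) for all (r,t) ∈ (0,R) × (0,T). Then for all (r,t) ∈ (0,R) × (0,T): ∂ₜ∂ₛφ(s(r),t) = ξ(r)²·∂ₛ³φ(s(r),t) + (4m+2)·ξ'(r)·∂ₛ²φ(s(r),t) − (4m/(4m−1))·( (4m+8)·κ + ((12m−12)/(4m−1))·( sn_κ'(r)/sn_κ(r) − sn_{4κ}'(r)/sn_{4κ}(r) )² )·∂ₛφ(s(r),t). -/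

import Mathlib

/-!
Differentiate the heat equation, read along `r ↦ (s(r), t)`, with respect to `r`. Since `s' = ξ > 0`,
the chain rule turns `d/dr` into `ξ ∂ₛ`, and division by `ξ` gives
`∂ₛ∂ₜφ = ξ² ∂ₛ³φ + (4m + 2) ξ' ∂ₛ²φ + 4m (ξ''/ξ) ∂ₛφ`; the mixed partials commute because `φ` is
smooth on the open set `U` (`dT_dS_comm`).

It remains to compute `ξ''/ξ`. Put `A = sn_κ'/sn_κ`, `B = sn_{4κ}'/sn_{4κ}`, `p = 4m - 4` and
`n = p + 3 = 4m - 1`. Then `ξ'/ξ = (pA + 3B)/n`, and `sn_κ'' = -κ sn_κ` gives the Riccati equations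
`A' = -κ - A²`, `B' = -4κ - B²`. Hence
`ξ''/ξ = -(p + 12)κ/n - (pA² + 3B²)/n + (pA + 3B)²/n² = -(p + 12)κ/n - 3p(A - B)²/n²`,
the last step being the variance identity for the weights `p/n` and `3/n`.
-/


open Set Filter

/-- The generalized sine function `sn_κ` of the simply connected space form
of constant sectional curvature `κ`. -/
noncomputable def sn (κ : ℝ) : ℝ → ℝ := fun r =>
  if 0 < κ then Real.sin (Real.sqrt κ * r) / Real.sqrt κ
  else if κ = 0 then r
  else Real.sinh (Real.sqrt (-κ) * r) / Real.sqrt (-κ)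

/-- The reparametrizing variable `s_κ(r)`, an antiderivative of `sn_κ`. -/
noncomputable def sVar (κ : ℝ) : ℝ → ℝ := fun r =>
  if 0 < κ then (1 - Real.cos (Real.sqrt κ * r)) / κ
  else if κ = 0 then r ^ 2 / 2
  else (Real.cosh (Real.sqrt (-κ) * r) - 1) / (-κ)

/-- Partial derivative of a function of two real variables in its first argument. -/
noncomputable def dS (φ : ℝ → ℝ → ℝ) : ℝ → ℝ → ℝ := fun s t => deriv (fun x => φ x t) s

/-- Partial derivative of a function of two real variables in its second argument. -/
noncomputable def dT (φ : ℝ → ℝ → ℝ) : ℝ → ℝ → ℝ := fun s t => deriv (fun τ => φ s τ) t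

/-- The coefficient function `ξ(r) = (sn_κ(r)^{4m-4} sn_{4κ}(r)³)^{1/(4m-1)}` of the
quaternion Kähler model space of quaternionic dimension `m` and scalar curvature
`16m(m+2)κ`. -/
noncomputable def xiQ (κ : ℝ) (m : ℕ) : ℝ → ℝ := fun r =>
  (sn κ r ^ (4 * m - 4) * sn (4 * κ) r ^ 3) ^ ((1 : ℝ) / (4 * (m : ℝ) - 1))

/-- The antiderivative `s(r) = ∫₀^r ξ`. -/
noncomputable def sXi (κ : ℝ) (m : ℕ) : ℝ → ℝ := fun r => ∫ ρ in (0:ℝ)..r, xiQ κ m ρ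

/-- The generalized cosine function, i.e. the derivative of `sn κ`. -/
noncomputable def cs (κ : ℝ) : ℝ → ℝ := fun r =>
  if 0 < κ then Real.cos (Real.sqrt κ * r)
  else if κ = 0 then 1
  else Real.cosh (Real.sqrt (-κ) * r)

lemma hasDerivAt_sn (κ r : ℝ) : HasDerivAt (sn κ) (cs κ r) r := by
  rcases lt_trichotomy κ 0 with h | h | h
  · have h0 : Real.sqrt (-κ) ≠ 0 := (Real.sqrt_pos.2 (by linarith)).ne'
    have e1 : sn κ = fun r => Real.sinh (Real.sqrt (-κ) * r) / Real.sqrt (-κ) := by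
      funext x; simp [sn, h.not_gt, h.ne]
    have e2 : cs κ r = Real.cosh (Real.sqrt (-κ) * r) := by simp [cs, h.not_gt, h.ne]
    rw [e1, e2]
    exact ((hasDerivAt_const_mul (Real.sqrt (-κ))).sinh.div_const (Real.sqrt (-κ))).congr_deriv
      (by field_simp)
  · subst h
    have e1 : sn 0 = fun r => r := by funext x; simp [sn]
    have e2 : cs 0 r = 1 := by simp [cs]
    rw [e1, e2]; exact hasDerivAt_id r
  · have h0 : Real.sqrt κ ≠ 0 := (Real.sqrt_pos.2 h).ne'
    have e1 : sn κ = fun r => Real.sin (Real.sqrt κ * r) / Real.sqrt κ := by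
      funext x; simp [sn, h]
    have e2 : cs κ r = Real.cos (Real.sqrt κ * r) := by simp [cs, h]
    rw [e1, e2]
    exact ((hasDerivAt_const_mul (Real.sqrt κ)).sin.div_const (Real.sqrt κ)).congr_deriv
      (by field_simp)

lemma hasDerivAt_cs (κ r : ℝ) : HasDerivAt (cs κ) (-κ * sn κ r) r := by
  rcases lt_trichotomy κ 0 with h | h | h
  · have h0 : Real.sqrt (-κ) ≠ 0 := (Real.sqrt_pos.2 (by linarith)).ne'
    have hs : Real.sqrt (-κ) ^ 2 = -κ := Real.sq_sqrt (by linarith)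
    have e1 : cs κ = fun r => Real.cosh (Real.sqrt (-κ) * r) := by
      funext x; simp [cs, h.not_gt, h.ne]
    have e2 : sn κ r = Real.sinh (Real.sqrt (-κ) * r) / Real.sqrt (-κ) := by
      simp [sn, h.not_gt, h.ne]
    rw [e1, e2]
    refine (hasDerivAt_const_mul (Real.sqrt (-κ))).cosh.congr_deriv ?_
    generalize Real.sqrt (-κ) = q at h0 hs ⊢
    rw [← hs]; field_simp
  · subst h
    have e1 : cs 0 = fun _ => 1 := by funext x; simp [cs]
    rw [e1]; simpa using hasDerivAt_const r (1 : ℝ)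
  · have h0 : Real.sqrt κ ≠ 0 := (Real.sqrt_pos.2 h).ne'
    have hs : Real.sqrt κ ^ 2 = κ := Real.sq_sqrt h.le
    have e1 : cs κ = fun r => Real.cos (Real.sqrt κ * r) := by funext x; simp [cs, h]
    have e2 : sn κ r = Real.sin (Real.sqrt κ * r) / Real.sqrt κ := by simp [sn, h]
    rw [e1, e2]
    refine (hasDerivAt_const_mul (Real.sqrt κ)).cos.congr_deriv ?_
    generalize Real.sqrt κ = q at h0 hs ⊢
    rw [← hs]; field_simp

lemma sn_pos {κ r : ℝ} (hr : 0 < r) (h : 0 < κ → Real.sqrt κ * r < Real.pi) : 0 < sn κ r := by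
  unfold sn
  split_ifs with h1 h2
  · have := Real.sqrt_pos.2 h1
    exact div_pos (Real.sin_pos_of_pos_of_lt_pi (by positivity) (h h1)) this
  · exact hr
  · have : 0 < Real.sqrt (-κ) := Real.sqrt_pos.2 (by
      have := lt_of_le_of_ne (not_lt.1 h1) h2
      linarith)
    exact div_pos (Real.sinh_pos_iff.2 (by positivity)) this

lemma continuous_sn (κ : ℝ) : Continuous (sn κ) :=
  continuous_iff_continuousAt.2 fun r => (hasDerivAt_sn κ r).continuousAt

/-- The Riccati equation for the logarithmic derivative of `sn κ`. -/
lemma hasDerivAt_cs_div_sn {κ r : ℝ} (h : 0 < sn κ r) :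
    HasDerivAt (fun x => cs κ x / sn κ x) (-κ - (cs κ r / sn κ r) ^ 2) r := by
  refine ((hasDerivAt_cs κ r).div (hasDerivAt_sn κ r) h.ne').congr_deriv ?_
  field_simp

/-- The logarithmic derivative `ξ'/ξ`, a weighted mean of those of `sn κ` and `sn (4 * κ)`. -/
noncomputable def xiLog (κ : ℝ) (m : ℕ) : ℝ → ℝ := fun r =>
  1 / (4 * (m : ℝ) - 1)
    * ((4 * (m : ℝ) - 4) * (cs κ r / sn κ r) + 3 * (cs (4 * κ) r / sn (4 * κ) r))

lemma four_mul_sub_one_pos {m : ℕ} (hm : 1 ≤ m) : (0 : ℝ) < 4 * (m : ℝ) - 1 := by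
  have : (1 : ℝ) ≤ m := by exact_mod_cast hm
  linarith

lemma continuous_xiQ (κ : ℝ) {m : ℕ} (hm : 1 ≤ m) : Continuous (xiQ κ m) := by
  have h : (0 : ℝ) ≤ 1 / (4 * (m : ℝ) - 1) := by
    have := four_mul_sub_one_pos hm
    positivity
  exact (((continuous_sn κ).pow _).mul ((continuous_sn (4 * κ)).pow 3)).rpow_const
    fun _ => Or.inr h

lemma hasDerivAt_sXi (κ : ℝ) {m : ℕ} (hm : 1 ≤ m) (r : ℝ) :
    HasDerivAt (sXi κ m) (xiQ κ m r) r :=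
  (continuous_xiQ κ hm).integral_hasStrictDerivAt 0 r |>.hasDerivAt

lemma xiQ_pos {κ r : ℝ} {m : ℕ} (h1 : 0 < sn κ r) (h4 : 0 < sn (4 * κ) r) : 0 < xiQ κ m r :=
  Real.rpow_pos_of_pos (by positivity) _

lemma hasDerivAt_xiQ {κ r : ℝ} {m : ℕ} (hm : 1 ≤ m) (h1 : 0 < sn κ r) (h4 : 0 < sn (4 * κ) r) :
    HasDerivAt (xiQ κ m) (xiQ κ m r * xiLog κ m r) r := by
  have hb : 0 < sn κ r ^ (4 * m - 4) * sn (4 * κ) r ^ 3 := by positivity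
  have hd := ((hasDerivAt_sn κ r).pow (4 * m - 4)).mul ((hasDerivAt_sn (4 * κ) r).pow 3)
  have key := hd.rpow_const (p := 1 / (4 * (m : ℝ) - 1)) (Or.inl hb.ne')
  refine key.congr_deriv ?_
  simp only [Pi.mul_apply, Pi.pow_apply]
  rw [Real.rpow_sub_one hb.ne']
  have hc : ((4 * m - 4 : ℕ) : ℝ) = 4 * (m : ℝ) - 4 := by
    rw [Nat.cast_sub (by omega)]; push_cast; ring
  -- For `m = 1` the exponent `4m - 4` vanishes, so `x ^ (4m - 4 - 1)` may be rewritten only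
  -- together with its coefficient.
  have hp : ((4 * m - 4 : ℕ) : ℝ) * sn κ r ^ (4 * m - 4 - 1)
      = (4 * (m : ℝ) - 4) * sn κ r ^ (4 * m - 4) / sn κ r := by
    rw [← hc]
    rcases Nat.eq_zero_or_pos (4 * m - 4) with h | h
    · simp [h]
    · obtain ⟨k, hk⟩ := Nat.exists_eq_add_of_le' h
      rw [hk, pow_succ]
      simp only [Nat.add_sub_cancel]
      field_simp
  rw [hp]
  unfold xiQ xiLog
  have hn := (four_mul_sub_one_pos hm).ne'
  generalize (sn κ r ^ (4 * m - 4) * sn (4 * κ) r ^ 3) ^ (1 / (4 * (m : ℝ) - 1)) = y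
  push_cast
  field_simp

/-- The value of `ξ''`, in the form provided by the variance identity. -/
lemma hasDerivAt_deriv_xiQ {κ r : ℝ} {m : ℕ} (hm : 1 ≤ m)
    (h1 : 0 < sn κ r) (h4 : 0 < sn (4 * κ) r) :
    HasDerivAt (deriv (xiQ κ m))
      (-(xiQ κ m r / (4 * (m : ℝ) - 1)) * ((4 * (m : ℝ) + 8) * κ
        + ((12 * (m : ℝ) - 12) / (4 * (m : ℝ) - 1))
          * (cs κ r / sn κ r - cs (4 * κ) r / sn (4 * κ) r) ^ 2)) r := by
  have hev : deriv (xiQ κ m) =ᶠ[nhds r] fun x => xiQ κ m x * xiLog κ m x := by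
    filter_upwards [(continuous_sn κ).continuousAt.eventually (lt_mem_nhds h1),
      (continuous_sn (4 * κ)).continuousAt.eventually (lt_mem_nhds h4)] with x hx1 hx4
    exact (hasDerivAt_xiQ hm hx1 hx4).deriv
  have hlog := (((hasDerivAt_cs_div_sn h1).const_mul (4 * (m : ℝ) - 4)).add
    ((hasDerivAt_cs_div_sn h4).const_mul 3)).const_mul (1 / (4 * (m : ℝ) - 1))
  have hlog' : HasDerivAt (xiLog κ m) _ r := hlog
  refine (((hasDerivAt_xiQ hm h1 h4).mul hlog').congr_of_eventuallyEq hev).congr_deriv ?_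
  have hn := (four_mul_sub_one_pos hm).ne'
  unfold xiLog
  generalize cs κ r / sn κ r = A
  generalize cs (4 * κ) r / sn (4 * κ) r = B
  field_simp
  ring

section Partials

variable {φ : ℝ → ℝ → ℝ} {U : Set (ℝ × ℝ)}

lemma hasDerivAt_slice_left {s t : ℝ}
    (h : DifferentiableAt ℝ (fun p : ℝ × ℝ => φ p.1 p.2) (s, t)) :
    HasDerivAt (fun x => φ x t) (fderiv ℝ (fun p : ℝ × ℝ => φ p.1 p.2) (s, t) (1, 0)) s := by
  have h2 : HasDerivAt (fun x : ℝ => (x, t)) ((1 : ℝ), (0 : ℝ)) s :=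
    (hasDerivAt_id s).prodMk (hasDerivAt_const s t)
  exact h.hasFDerivAt.comp_hasDerivAt s h2

lemma hasDerivAt_slice_right {s t : ℝ}
    (h : DifferentiableAt ℝ (fun p : ℝ × ℝ => φ p.1 p.2) (s, t)) :
    HasDerivAt (fun y => φ s y) (fderiv ℝ (fun p : ℝ × ℝ => φ p.1 p.2) (s, t) (0, 1)) t := by
  have h2 : HasDerivAt (fun y : ℝ => (s, y)) ((0 : ℝ), (1 : ℝ)) t :=
    (hasDerivAt_const t s).prodMk (hasDerivAt_id t)
  exact h.hasFDerivAt.comp_hasDerivAt t h2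

lemma differentiableAt_of_smooth (hU : IsOpen U)
    (hφ : ContDiffOn ℝ (⊤ : ℕ∞) (fun p : ℝ × ℝ => φ p.1 p.2) U) {p : ℝ × ℝ} (hp : p ∈ U) :
    DifferentiableAt ℝ (fun p : ℝ × ℝ => φ p.1 p.2) p :=
  (hφ.contDiffAt (hU.mem_nhds hp)).differentiableAt (by simp)

lemma dS_eq_fderiv (hU : IsOpen U)
    (hφ : ContDiffOn ℝ (⊤ : ℕ∞) (fun p : ℝ × ℝ => φ p.1 p.2) U) {p : ℝ × ℝ} (hp : p ∈ U) :
    dS φ p.1 p.2 = fderiv ℝ (fun p : ℝ × ℝ => φ p.1 p.2) p (1, 0) :=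
  (hasDerivAt_slice_left (differentiableAt_of_smooth hU hφ hp)).deriv

lemma dT_eq_fderiv (hU : IsOpen U)
    (hφ : ContDiffOn ℝ (⊤ : ℕ∞) (fun p : ℝ × ℝ => φ p.1 p.2) U) {p : ℝ × ℝ} (hp : p ∈ U) :
    dT φ p.1 p.2 = fderiv ℝ (fun p : ℝ × ℝ => φ p.1 p.2) p (0, 1) :=
  (hasDerivAt_slice_right (differentiableAt_of_smooth hU hφ hp)).deriv

lemma hasDerivAt_dS (hU : IsOpen U)
    (hφ : ContDiffOn ℝ (⊤ : ℕ∞) (fun p : ℝ × ℝ => φ p.1 p.2) U) {s t : ℝ} (hp : (s, t) ∈ U) :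
    HasDerivAt (fun x => φ x t) (dS φ s t) s :=
  (hasDerivAt_slice_left (differentiableAt_of_smooth hU hφ hp)).differentiableAt.hasDerivAt

lemma contDiffOn_fderiv_apply (hU : IsOpen U)
    (hφ : ContDiffOn ℝ (⊤ : ℕ∞) (fun p : ℝ × ℝ => φ p.1 p.2) U) (v : ℝ × ℝ) :
    ContDiffOn ℝ (⊤ : ℕ∞) (fun p => fderiv ℝ (fun p : ℝ × ℝ => φ p.1 p.2) p v) U :=
  (hφ.fderiv_of_isOpen hU (by simp)).clm_apply contDiffOn_const

lemma contDiffOn_dS (hU : IsOpen U)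
    (hφ : ContDiffOn ℝ (⊤ : ℕ∞) (fun p : ℝ × ℝ => φ p.1 p.2) U) :
    ContDiffOn ℝ (⊤ : ℕ∞) (fun p : ℝ × ℝ => dS φ p.1 p.2) U :=
  (contDiffOn_fderiv_apply hU hφ (1, 0)).congr fun _ hp => dS_eq_fderiv hU hφ hp

lemma contDiffOn_dT (hU : IsOpen U)
    (hφ : ContDiffOn ℝ (⊤ : ℕ∞) (fun p : ℝ × ℝ => φ p.1 p.2) U) :
    ContDiffOn ℝ (⊤ : ℕ∞) (fun p : ℝ × ℝ => dT φ p.1 p.2) U :=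
  (contDiffOn_fderiv_apply hU hφ (0, 1)).congr fun _ hp => dT_eq_fderiv hU hφ hp

lemma dT_dS_comm (hU : IsOpen U)
    (hφ : ContDiffOn ℝ (⊤ : ℕ∞) (fun p : ℝ × ℝ => φ p.1 p.2) U) {s t : ℝ} (hp : (s, t) ∈ U) :
    dT (dS φ) s t = dS (dT φ) s t := by
  have hnhds := hU.mem_nhds hp
  have hat := hφ.contDiffAt hnhds
  have hsymm : IsSymmSndFDerivAt ℝ (fun p : ℝ × ℝ => φ p.1 p.2) (s, t) :=
    hat.isSymmSndFDerivAt (by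
    rw [minSmoothness_of_isRCLikeNormedField]
    exact WithTop.coe_le_coe.2 (le_top : (2 : ℕ∞) ≤ ⊤))
  have hd : DifferentiableAt ℝ (fderiv ℝ (fun p : ℝ × ℝ => φ p.1 p.2)) (s, t) :=
    ((hφ.fderiv_of_isOpen (m := (⊤ : ℕ∞)) hU (by simp)).contDiffAt hnhds).differentiableAt (by simp)
  have happ (v w : ℝ × ℝ) : fderiv ℝ (fun p => fderiv ℝ (fun p : ℝ × ℝ => φ p.1 p.2) p v) (s, t) w
      = fderiv ℝ (fderiv ℝ (fun p : ℝ × ℝ => φ p.1 p.2)) (s, t) w v := by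
    rw [(hd.hasFDerivAt.clm_apply (hasFDerivAt_const v (s, t))).fderiv]
    simp
  have e1 : (fun p : ℝ × ℝ => dS φ p.1 p.2) =ᶠ[nhds (s, t)]
      fun p => fderiv ℝ (fun p : ℝ × ℝ => φ p.1 p.2) p (1, 0) :=
    Filter.mem_of_superset hnhds fun _ hq => dS_eq_fderiv hU hφ hq
  have e2 : (fun p : ℝ × ℝ => dT φ p.1 p.2) =ᶠ[nhds (s, t)]
      fun p => fderiv ℝ (fun p : ℝ × ℝ => φ p.1 p.2) p (0, 1) :=
    Filter.mem_of_superset hnhds fun _ hq => dT_eq_fderiv hU hφ hq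
  rw [dT_eq_fderiv hU (contDiffOn_dS hU hφ) hp, dS_eq_fderiv hU (contDiffOn_dT hU hφ) hp,
    e1.fderiv_eq, e2.fderiv_eq, happ, happ]
  exact hsymm.eq _ _

end Partials

/-- differentiating the transformed radial heat equation of the
quaternion Kähler model space once in `s`. -/
theorem stmt13 (m : ℕ) (hm : 1 ≤ m) (κ T R : ℝ) (hT : 0 < T) (hR : 0 < R)
    (hκR : 0 < κ → 2 * Real.sqrt κ * R < Real.pi)
    (φ : ℝ → ℝ → ℝ) (U : Set (ℝ × ℝ)) (hU : IsOpen U)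
    (hmem : ∀ r ∈ Set.Ioo (0:ℝ) R, ∀ t ∈ Set.Ioo (0:ℝ) T, (sXi κ m r, t) ∈ U)
    (hφ : ContDiffOn ℝ (⊤ : ℕ∞) (fun p : ℝ × ℝ => φ p.1 p.2) U)
    (hheat : ∀ r ∈ Set.Ioo (0:ℝ) R, ∀ t ∈ Set.Ioo (0:ℝ) T,
      dT φ (sXi κ m r) t
        = (xiQ κ m r) ^ 2 * dS (dS φ) (sXi κ m r) t
          + 4 * (m : ℝ) * deriv (xiQ κ m) r * dS φ (sXi κ m r) t) :
    ∀ r ∈ Set.Ioo (0:ℝ) R, ∀ t ∈ Set.Ioo (0:ℝ) T,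
      dT (dS φ) (sXi κ m r) t
        = (xiQ κ m r) ^ 2 * dS (dS (dS φ)) (sXi κ m r) t
          + (4 * (m : ℝ) + 2) * deriv (xiQ κ m) r * dS (dS φ) (sXi κ m r) t
          - (4 * (m : ℝ) / (4 * (m : ℝ) - 1))
              * ((4 * (m : ℝ) + 8) * κ
                + ((12 * (m : ℝ) - 12) / (4 * (m : ℝ) - 1))
                    * (deriv (sn κ) r / sn κ r - deriv (sn (4 * κ)) r / sn (4 * κ) r) ^ 2)
              * dS φ (sXi κ m r) t := by
  intro r hr t ht
  have hpos : ∀ κ' : ℝ, κ' = κ ∨ κ' = 4 * κ → 0 < sn κ' r := by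
    intro κ' hκ'
    refine sn_pos hr.1 fun h => ?_
    have hκ : 0 < κ := by rcases hκ' with h' | h' <;> linarith
    have hs := Real.sqrt_pos.2 hκ
    have hsr : Real.sqrt κ * r < Real.sqrt κ * R := mul_lt_mul_of_pos_left hr.2 hs
    have hsr0 : 0 < Real.sqrt κ * r := mul_pos hs hr.1
    have h2 := hκR hκ
    rcases hκ' with rfl | rfl
    · linarith
    · rw [Real.sqrt_mul (by norm_num), show Real.sqrt 4 = 2 by
        rw [show (4 : ℝ) = 2 ^ 2 by norm_num]; exact Real.sqrt_sq (by norm_num)]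
      linarith
  have h1 := hpos κ (Or.inl rfl)
  have h4 := hpos (4 * κ) (Or.inr rfl)
  have hξ : 0 < xiQ κ m r := xiQ_pos h1 h4
  have hp := hmem r hr t ht
  have hs := hasDerivAt_sXi κ hm r
  have c1 := contDiffOn_dS hU hφ
  have c2 := contDiffOn_dS hU c1
  have dL := (hasDerivAt_dS hU (contDiffOn_dT hU hφ) hp).comp r hs
  have d1 := (hasDerivAt_dS hU c1 hp).comp r hs
  have d2 := (hasDerivAt_dS hU c2 hp).comp r hs
  have dξ := (hasDerivAt_xiQ hm h1 h4).differentiableAt.hasDerivAt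
  have dξ' := hasDerivAt_deriv_xiQ hm h1 h4
  have dR := ((dξ.pow 2).mul d2).add ((dξ'.const_mul (4 * (m : ℝ))).mul d1)
  have key := dL.unique (dR.congr_of_eventuallyEq (by
    filter_upwards [Ioo_mem_nhds hr.1 hr.2] with x hx
    exact hheat x hx t ht))
  rw [dT_dS_comm hU hφ hp, (hasDerivAt_sn κ r).deriv, (hasDerivAt_sn (4 * κ) r).deriv]
  -- `key` is the claim multiplied by `ξ(r)`.
  refine mul_right_cancel₀ hξ.ne' (key.trans ?_)
  simp only [Pi.pow_apply, Function.comp_apply]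
  push_cast
  have hn := (four_mul_sub_one_pos hm).ne'
  field_simp
  ring
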